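/- Let a = (4/π)·𝒦(1/√2)² and b = a/2. The function g(K) = (1/(K−1))·log(λ(K)·exp(b·(1/K − K))) is strictly increasing on (1, ∞); moreover g(K) → 0 as K → 1⁺ and g(K) → π − b as K → ∞, so g maps (1, ∞) onto (0, π − b). -/

import Mathlib

open Set Filter

/-- Complete elliptic integral of the first kind. -/
noncomputable def ellK (r : ℝ) : ℝ :=
  ∫ θ in (0:ℝ)..(Real.pi / 2), (1 - r ^ 2 * Real.sin θ ^ 2) ^ (-(1/2) : ℝ)

/-- The Grötzsch modulus μ(r) = (π/2)·𝒦'(r)/𝒦(r). -/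
noncomputable def mu (r : ℝ) : ℝ :=
  Real.pi / 2 * ellK (Real.sqrt (1 - r ^ 2)) / ellK r

/-!
Put `h(K) = log λ(K) + b (1 / K - K)`. Since `λ(1) = 1`, `h(1) = 0` and `g(K)` is the slope of the
chord of `h` over `[1, K]`; so everything follows once `h'` increases strictly from `h'(1) = 0` to
`h'(∞) = π - b`.

Write `𝒦`, `𝒦'` for the integrals at the parameters `m = r²` and `1 - m`, where `𝒦 / 𝒦' = K`.
Legendre's relation gives the derivative of `𝒦 / 𝒦'` in `m`, whence `(log λ)' = (4 / π) 𝒦'²` and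
`h' = (4 / π) 𝒦'² - b ((𝒦' / 𝒦)² + 1)`. With `B = (E - (1 - m) 𝒦) / m`, the derivative of the
latter in `m` has the sign of `Q(1/2) - Q(m)`, where `Q(m) = (1 - m) B(1 - m) 𝒦(m)³` is strictly
decreasing because `B ≤ 𝒦 / 2`.
-/

open Real Topology

section Calculus

lemma tendsto_const_sub_nhdsLT (a b : ℝ) : Tendsto (fun x ↦ a - x) (𝓝[<] b) (𝓝[>] (a - b)) :=
  (by fun_prop : ContinuousWithinAt (fun x ↦ a - x) (Iio b) b).tendsto_nhdsWithin
    fun _ hx ↦ sub_lt_sub_left (mem_Iio.mp hx) a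

lemma tendsto_const_sub_nhdsGT (a b : ℝ) : Tendsto (fun x ↦ a - x) (𝓝[>] b) (𝓝[<] (a - b)) :=
  (by fun_prop : ContinuousWithinAt (fun x ↦ a - x) (Ioi b) b).tendsto_nhdsWithin
    fun _ hx ↦ sub_lt_sub_left (mem_Ioi.mp hx) a

lemma sq_mul_sq_rpow_neg_half (x : ℝ) : x ^ 2 * (x ^ 2) ^ (-(1 / 2) : ℝ) = |x| := by
  rw [rpow_neg (sq_nonneg x), ← sqrt_eq_rpow, sqrt_sq_eq_abs, ← sq_abs, sq, mul_self_mul_inv]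

variable {E : Type*} [NormedAddCommGroup E] [NormedSpace ℝ E]

lemma hasDerivAt_intervalIntegral_of_continuousOn {𝕜 : Type*} [RCLike 𝕜] [NormedSpace 𝕜 E]
    {F F' : 𝕜 → ℝ → E} {a b : ℝ} {x₀ : 𝕜} {U : Set 𝕜} (hU : U ∈ 𝓝 x₀)
    (hF : ∀ x ∈ U, ContinuousOn (F x) (uIcc a b))
    (hF' : ContinuousOn F'.uncurry (U ×ˢ uIcc a b))
    (hderiv : ∀ x ∈ U, ∀ t ∈ uIcc a b, HasDerivAt (F · t) (F' x t) x) :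
    HasDerivAt (fun x ↦ ∫ t in a..b, F x t) (∫ t in a..b, F' x₀ t) x₀ := by
  obtain ⟨ε, hε, hball⟩ := Metric.nhds_basis_closedBall.mem_iff.mp hU
  obtain ⟨C, hC⟩ := ((isCompact_closedBall x₀ ε).prod isCompact_uIcc).exists_bound_of_continuousOn
    (hF'.mono (prod_mono_left hball))
  have hF'₀ : ContinuousOn (F' x₀) (uIcc a b) :=
    hF'.comp (Continuous.prodMk_right x₀).continuousOn fun t ht ↦ ⟨mem_of_mem_nhds hU, ht⟩
  refine (intervalIntegral.hasDerivAt_integral_of_dominated_loc_of_deriv_le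
    (bound := fun _ ↦ C) (Metric.closedBall_mem_nhds x₀ hε) ?_
    (hF x₀ (mem_of_mem_nhds hU)).intervalIntegrable
    hF'₀.intervalIntegrable.aestronglyMeasurable_restrict_uIoc ?_ intervalIntegrable_const ?_).2
  · filter_upwards [hU] with x hx
    exact (hF x hx).intervalIntegrable.aestronglyMeasurable_restrict_uIoc
  · exact .of_forall fun t ht x hx ↦ hC (x, t) ⟨hx, uIoc_subset_uIcc ht⟩
  · exact .of_forall fun t ht x hx ↦ hderiv x (hball hx) t (uIoc_subset_uIcc ht)

lemma tendsto_slope_atTop_of_tendsto_deriv {f f' : ℝ → E} {a : ℝ} {L : E}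
    (hderiv : ∀ᶠ x in atTop, HasDerivAt f (f' x) x) (hL : Tendsto f' atTop (𝓝 L)) :
    Tendsto (slope f a) atTop (𝓝 L) := by
  rw [Metric.tendsto_nhds]
  intro ε hε
  obtain ⟨z, hz⟩ := eventually_atTop.mp
    (hderiv.and (hL.eventually (Metric.closedBall_mem_nhds L (half_pos hε))))
  have hlip : ∀ x ∈ Ici z, ‖(f x - x • L) - (f z - z • L)‖ ≤ ε / 2 * ‖x - z‖ := fun x hx ↦
    (convex_Ici z).norm_image_sub_le_of_norm_hasDerivWithin_le
      (f' := fun y ↦ f' y - (1 : ℝ) • L)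
      (fun y hy ↦ ((hz y hy).1.sub ((hasDerivAt_id y).smul_const L)).hasDerivWithinAt)
      (fun y hy ↦ by simpa [dist_eq_norm] using (hz y hy).2) self_mem_Ici hx
  set D := ‖(f z - z • L) - (f a - a • L)‖
  filter_upwards [eventually_gt_atTop a, eventually_ge_atTop z,
    eventually_gt_atTop ((D + ε * a - ε / 2 * z) / (ε / 2))] with x hax hzx hx
  have hxa : 0 < x - a := sub_pos.mpr hax
  have hlip_x : ‖(f x - x • L) - (f z - z • L)‖ ≤ ε / 2 * (x - z) := by
    simpa only [Real.norm_of_nonneg (sub_nonneg.mpr hzx)] using hlip x hzx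
  have hslope : slope f a x - L = (x - a)⁻¹ • ((f x - x • L) - (f a - a • L)) := by
    rw [slope_def_module, ← inv_smul_smul₀ hxa.ne' L, ← smul_sub, inv_smul_smul₀ hxa.ne', sub_smul]
    congr 1
    abel
  rw [dist_eq_norm, hslope, norm_smul, norm_inv, Real.norm_of_nonneg hxa.le,
    inv_mul_lt_iff₀ hxa]
  calc ‖(f x - x • L) - (f a - a • L)‖ ≤ ε / 2 * (x - z) + D :=
        (norm_sub_le_norm_sub_add_norm_sub _ (f z - z • L) _).trans (by gcongr)
    _ < (x - a) * ε := by
        rw [div_lt_iff₀ (half_pos hε)] at hx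
        linarith

lemma strictMonoOn_slope_of_strictMonoOn_deriv {f f' : ℝ → ℝ} {a : ℝ}
    (hderiv : ∀ x ∈ Ici a, HasDerivAt f (f' x) x) (hf' : StrictMonoOn f' (Ici a)) :
    StrictMonoOn (slope f a) (Ioi a) := by
  have hconvex : StrictConvexOn ℝ (Ici a) f := by
    refine StrictMonoOn.strictConvexOn_of_deriv (convex_Ici a) (HasDerivAt.continuousOn hderiv) ?_
    refine (hf'.mono interior_subset).congr fun x hx ↦ (hderiv x (interior_subset hx)).deriv.symm
  intro x hx y hy hxy
  simpa only [slope_def_field] using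
    hconvex.secant_strict_mono self_mem_Ici (Ioi_subset_Ici_self hx) (Ioi_subset_Ici_self hy)
      hx.ne' hy.ne' hxy

lemma image_Ioi_eq_Ioo_of_tendsto {α β : Type*} [ConditionallyCompleteLinearOrder α]
    [TopologicalSpace α] [OrderTopology α] [DenselyOrdered α] [NoMaxOrder α] [LinearOrder β]
    [TopologicalSpace β] [OrderClosedTopology β] {f : α → β} {a : α} {l u : β}
    (hf : StrictMonoOn f (Ioi a)) (hcont : ContinuousOn f (Ioi a))
    (hl : Tendsto f (𝓝[>] a) (𝓝 l)) (hu : Tendsto f atTop (𝓝 u)) : f '' Ioi a = Ioo l u := by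
  refine Subset.antisymm ?_ (isPreconnected_Ioi.intermediate_value_Ioo
    (l₁ := 𝓝[>] a) inf_le_right (le_principal_iff.mpr (Ioi_mem_atTop a)) hcont hl hu)
  rintro _ ⟨x, hx, rfl⟩
  obtain ⟨w, haw, hwx⟩ := exists_between (mem_Ioi.mp hx)
  obtain ⟨y, hxy⟩ := exists_gt x
  have hay : a < y := hx.trans hxy
  constructor
  · refine (le_of_tendsto hl ?_).trans_lt (hf haw hx hwx)
    filter_upwards [Ioo_mem_nhdsGT haw] with t ht using (hf ht.1 haw ht.2).le
  · refine (hf hx hay hxy).trans_le (ge_of_tendsto hu ?_)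
    filter_upwards [eventually_gt_atTop y] with t ht using (hf hay (hay.trans ht) ht).le

end Calculus

section EllipticIntegral

/-- The complete elliptic integral of the first kind as a function of the parameter `m = r²`. -/
noncomputable def ellipticK (m : ℝ) : ℝ :=
  ∫ θ in (0 : ℝ)..π / 2, (1 - m * sin θ ^ 2) ^ (-(1 / 2) : ℝ)

/-- The associated complete elliptic integral `B(m) = (E(m) - (1 - m) K(m)) / m` of the second
kind, where `E` is the complete elliptic integral of the second kind. -/
noncomputable def ellipticB (m : ℝ) : ℝ :=
  ∫ θ in (0 : ℝ)..π / 2, cos θ ^ 2 * (1 - m * sin θ ^ 2) ^ (-(1 / 2) : ℝ)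

variable {m : ℝ}

lemma one_sub_mul_sin_sq_pos (hm : m < 1) (θ : ℝ) : 0 < 1 - m * sin θ ^ 2 := by
  have hs := sin_sq_le_one θ
  rcases (sq_nonneg (sin θ)).eq_or_lt with h | h <;> nlinarith

lemma continuous_one_sub_mul_sin_sq_rpow (hm : m < 1) (s : ℝ) :
    Continuous fun θ ↦ (1 - m * sin θ ^ 2) ^ s :=
  Continuous.rpow_const (by fun_prop) fun θ ↦ .inl (one_sub_mul_sin_sq_pos hm θ).ne'

lemma continuous_mul_one_sub_mul_sin_sq_rpow {w : ℝ → ℝ} (hw : Continuous w) (hm : m < 1) (s : ℝ) :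
    Continuous fun θ ↦ w θ * (1 - m * sin θ ^ 2) ^ s :=
  hw.mul (continuous_one_sub_mul_sin_sq_rpow hm s)

lemma intervalIntegrable_mul_one_sub_mul_sin_sq_rpow {w : ℝ → ℝ} (hw : Continuous w) (hm : m < 1)
    (s a b : ℝ) :
    IntervalIntegrable (fun θ ↦ w θ * (1 - m * sin θ ^ 2) ^ s) MeasureTheory.volume a b :=
  (continuous_mul_one_sub_mul_sin_sq_rpow hw hm s).intervalIntegrable a b

lemma rpow_neg_half_eq_mul_rpow_neg_half_sub_one {x : ℝ} (hx : 0 < x) :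
    x ^ (-(1 / 2) : ℝ) = x * x ^ (-(1 / 2) - 1 : ℝ) := by
  rw [rpow_sub_one hx.ne', mul_div_cancel₀ _ hx.ne']

lemma hasDerivAt_integral_mul_one_sub_mul_sin_sq_rpow {w : ℝ → ℝ} (hw : Continuous w) (a b s : ℝ)
    (hm : m < 1) :
    HasDerivAt (fun x ↦ ∫ θ in a..b, w θ * (1 - x * sin θ ^ 2) ^ s)
      (∫ θ in a..b, -s * (w θ * sin θ ^ 2) * (1 - m * sin θ ^ 2) ^ (s - 1)) m := by
  refine hasDerivAt_intervalIntegral_of_continuousOn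
    (F' := fun x θ ↦ -s * (w θ * sin θ ^ 2) * (1 - x * sin θ ^ 2) ^ (s - 1)) (Iio_mem_nhds hm)
    (fun x hx ↦ (continuous_mul_one_sub_mul_sin_sq_rpow hw hx s).continuousOn) ?_
    fun x hx θ _ ↦ ?_
  · refine ContinuousOn.mul (by fun_prop) (ContinuousOn.rpow_const (by fun_prop) ?_)
    exact fun p hp ↦ .inl (one_sub_mul_sin_sq_pos hp.1 p.2).ne'
  · have hbase : HasDerivAt (fun x : ℝ ↦ 1 - x * sin θ ^ 2) (-sin θ ^ 2) x := by
      simpa using (hasDerivAt_mul_const (sin θ ^ 2)).const_sub 1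
    refine ((hbase.rpow_const (.inl (one_sub_mul_sin_sq_pos hx θ).ne')).const_mul
      (w θ)).congr_deriv ?_
    ring

lemma integral_deriv_sin_mul_cos_mul_rpow (hm : m < 1) :
    ∫ θ in (0 : ℝ)..π / 2, (cos θ ^ 2 - sin θ ^ 2 + m * sin θ ^ 4) *
      (1 - m * sin θ ^ 2) ^ (-(1 / 2) - 1 : ℝ) = 0 := by
  have hderiv : ∀ θ ∈ uIcc 0 (π / 2),
      HasDerivAt (fun θ ↦ sin θ * cos θ * (1 - m * sin θ ^ 2) ^ (-(1 / 2) : ℝ))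
        ((cos θ ^ 2 - sin θ ^ 2 + m * sin θ ^ 4) *
          (1 - m * sin θ ^ 2) ^ (-(1 / 2) - 1 : ℝ)) θ := fun θ _ ↦ by
    have hpos := one_sub_mul_sin_sq_pos hm θ
    have hbase := (((hasDerivAt_sin θ).fun_pow 2).const_mul m).const_sub 1
    refine (((hasDerivAt_sin θ).mul (hasDerivAt_cos θ)).mul
      (hbase.rpow_const (.inl hpos.ne'))).congr_deriv ?_
    simp only [Pi.mul_apply]
    rw [rpow_neg_half_eq_mul_rpow_neg_half_sub_one hpos]
    ring
  rw [intervalIntegral.integral_eq_sub_of_hasDerivAt hderiv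
    (intervalIntegrable_mul_one_sub_mul_sin_sq_rpow (by fun_prop) hm _ _ _)]
  simp

lemma hasDerivAt_ellipticK (hm : m < 1) :
    HasDerivAt ellipticK (ellipticB m / (2 * (1 - m))) m := by
  have hderiv := hasDerivAt_integral_mul_one_sub_mul_sin_sq_rpow (w := fun _ ↦ 1)
    continuous_const 0 (π / 2) (-(1 / 2)) hm
  simp only [one_mul] at hderiv
  refine hderiv.congr_deriv ?_
  rw [eq_div_iff (by linarith), ellipticB, eq_comm, ← sub_eq_zero,
    ← intervalIntegral.integral_mul_const, ← intervalIntegral.integral_sub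
      (intervalIntegrable_mul_one_sub_mul_sin_sq_rpow (by fun_prop) hm _ _ _)
      ((intervalIntegrable_mul_one_sub_mul_sin_sq_rpow (by fun_prop) hm _ _ _).mul_const _)]
  refine (intervalIntegral.integral_congr fun θ _ ↦ ?_).trans
    (integral_deriv_sin_mul_cos_mul_rpow hm)
  simp only [rpow_neg_half_eq_mul_rpow_neg_half_sub_one (one_sub_mul_sin_sq_pos hm θ), cos_sq']
  ring

lemma continuousAt_ellipticB (hm : m < 1) : ContinuousAt ellipticB m :=
  (hasDerivAt_integral_mul_one_sub_mul_sin_sq_rpow (w := fun θ ↦ cos θ ^ 2) (by fun_prop) 0 (π / 2)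
    (-(1 / 2)) hm).continuousAt

lemma hasDerivAt_mul_ellipticB (hm : m < 1) :
    HasDerivAt (fun x ↦ x * ellipticB x) (ellipticK m / 2) m := by
  have hderiv := (hasDerivAt_id m).mul (hasDerivAt_integral_mul_one_sub_mul_sin_sq_rpow
    (w := fun θ ↦ cos θ ^ 2) (by fun_prop) 0 (π / 2) (-(1 / 2)) hm)
  refine hderiv.congr_deriv ?_
  have hint (w : ℝ → ℝ) (hw : Continuous w) (s : ℝ) :=
    intervalIntegrable_mul_one_sub_mul_sin_sq_rpow hw hm s 0 (π / 2)
  have hintK := hint (fun _ ↦ 1) continuous_const (-(1 / 2))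
  have hintB := (hint (fun θ ↦ cos θ ^ 2) (by fun_prop) (-(1 / 2))).const_mul 1
  have hintB' := (hint (fun θ ↦ -(-(1 / 2)) * (cos θ ^ 2 * sin θ ^ 2)) (by fun_prop)
    (-(1 / 2) - 1)).const_mul m
  simp only [one_mul] at hintK
  rw [eq_div_iff two_ne_zero, ellipticK, ← sub_eq_zero, id, ← intervalIntegral.integral_const_mul,
    ← intervalIntegral.integral_const_mul, ← intervalIntegral.integral_add hintB hintB',
    ← intervalIntegral.integral_mul_const,
    ← intervalIntegral.integral_sub ((hintB.add hintB').mul_const 2) hintK]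
  refine (intervalIntegral.integral_congr fun θ _ ↦ ?_).trans
    (integral_deriv_sin_mul_cos_mul_rpow hm)
  simp only [rpow_neg_half_eq_mul_rpow_neg_half_sub_one (one_sub_mul_sin_sq_pos hm θ), cos_sq']
  ring

lemma ellipticK_zero : ellipticK 0 = π / 2 := by simp [ellipticK]

lemma ellipticB_zero : ellipticB 0 = π / 4 := by
  simp only [ellipticB, zero_mul, sub_zero, one_rpow, mul_one, integral_cos_sq, cos_pi_div_two,
    sin_zero, mul_zero]
  ring

lemma ellipticK_pos (hm : m < 1) : 0 < ellipticK m :=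
  intervalIntegral.intervalIntegral_pos_of_pos
    ((continuous_one_sub_mul_sin_sq_rpow hm _).intervalIntegrable _ _)
    (fun θ ↦ rpow_pos_of_pos (one_sub_mul_sin_sq_pos hm θ) _) pi_div_two_pos

lemma monotoneOn_ellipticB : MonotoneOn ellipticB (Iio 1) := by
  intro x hx y hy hxy
  refine intervalIntegral.integral_mono_on pi_div_two_pos.le
    (intervalIntegrable_mul_one_sub_mul_sin_sq_rpow (by fun_prop) hx _ _ _)
    (intervalIntegrable_mul_one_sub_mul_sin_sq_rpow (by fun_prop) hy _ _ _) fun θ _ ↦ ?_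
  gcongr ?_ * ?_
  exact rpow_le_rpow_of_nonpos (one_sub_mul_sin_sq_pos hy θ) (by gcongr) (by norm_num)

lemma ellipticB_pos (hm : m < 1) : 0 < ellipticB m := by
  refine intervalIntegral.intervalIntegral_pos_of_pos_on
    (intervalIntegrable_mul_one_sub_mul_sin_sq_rpow (by fun_prop) hm _ _ _) (fun θ hθ ↦ ?_)
    pi_div_two_pos
  have hcos : 0 < cos θ := cos_pos_of_mem_Ioo ⟨by linarith [hθ.1, pi_pos], hθ.2⟩
  exact mul_pos (pow_pos hcos 2) (rpow_pos_of_pos (one_sub_mul_sin_sq_pos hm θ) _)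

lemma ellipticB_le_half_ellipticK (hm₀ : 0 < m) (hm : m < 1) : ellipticB m ≤ ellipticK m / 2 := by
  have hderiv : ∀ x < 1, HasDerivAt (fun x ↦ x * ellipticK x - 2 * (x * ellipticB x))
      (x * (ellipticB x / (2 * (1 - x)))) x := fun x hx ↦
    (((hasDerivAt_id x).mul (hasDerivAt_ellipticK hx)).sub
      ((hasDerivAt_mul_ellipticB hx).const_mul 2)).congr_deriv (by simp only [id]; ring)
  have hmono : MonotoneOn (fun x ↦ x * ellipticK x - 2 * (x * ellipticB x)) (Ico 0 1) := by
    refine monotoneOn_of_hasDerivWithinAt_nonneg (convex_Ico 0 1)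
      (HasDerivAt.continuousOn fun x hx ↦ hderiv x hx.2)
      (fun x hx ↦ (hderiv x (interior_subset hx).2).hasDerivWithinAt) fun x hx ↦ ?_
    obtain ⟨hx₀, hx₁⟩ := interior_subset hx
    have := ellipticB_pos hx₁
    positivity
  have hle := hmono ⟨le_rfl, one_pos⟩ ⟨hm₀.le, hm⟩ hm₀.le
  simp only [zero_mul, mul_zero, sub_zero] at hle
  nlinarith

lemma le_ellipticK (hm₀ : 0 ≤ m) (hm : m < 1) :
    π / 2 - π / 8 * log (1 - m) ≤ ellipticK m := by
  have hderiv : ∀ x < 1, HasDerivAt (fun x ↦ ellipticK x + π / 8 * log (1 - x))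
      ((ellipticB x - π / 4) / (2 * (1 - x))) x := fun x hx ↦ by
    have hx' : 1 - x ≠ 0 := (sub_pos.mpr hx).ne'
    refine ((hasDerivAt_ellipticK hx).add
      ((((hasDerivAt_id x).const_sub 1).log hx').const_mul (π / 8))).congr_deriv ?_
    simp only [id]
    field_simp
    ring
  have hmono : MonotoneOn (fun x ↦ ellipticK x + π / 8 * log (1 - x)) (Ico 0 1) := by
    refine monotoneOn_of_hasDerivWithinAt_nonneg (convex_Ico 0 1)
      (HasDerivAt.continuousOn fun x hx ↦ hderiv x hx.2)
      (fun x hx ↦ (hderiv x (interior_subset hx).2).hasDerivWithinAt) fun x hx ↦ ?_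
    obtain ⟨hx₀, hx₁⟩ := interior_subset hx
    rw [← ellipticB_zero]
    exact div_nonneg (sub_nonneg.mpr (monotoneOn_ellipticB (mem_Iio.mpr one_pos) hx₁ hx₀))
      (by linarith)
  have hle := hmono ⟨le_rfl, one_pos⟩ ⟨hm₀, hm⟩ hm₀
  simp only [ellipticK_zero, sub_zero, log_one, mul_zero, add_zero] at hle
  linarith

lemma ellipticK_le (hm₀ : 0 ≤ m) (hm : m < 1) :
    ellipticK m ≤ π / 2 * (1 - m) ^ (-(1 / 2) : ℝ) := by
  calc ellipticK m ≤ ∫ _ in (0 : ℝ)..π / 2, (1 - m) ^ (-(1 / 2) : ℝ) := by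
        refine intervalIntegral.integral_mono_on pi_div_two_pos.le
          ((continuous_one_sub_mul_sin_sq_rpow hm _).intervalIntegrable _ _)
          intervalIntegrable_const fun θ _ ↦ ?_
        exact rpow_le_rpow_of_nonpos (sub_pos.mpr hm) (by nlinarith [sin_sq_le_one θ])
          (by norm_num)
    _ = π / 2 * (1 - m) ^ (-(1 / 2) : ℝ) := by simp

lemma tendsto_ellipticK_atTop : Tendsto ellipticK (𝓝[<] 1) atTop := by
  have hlog : Tendsto (fun m : ℝ ↦ log (1 - m)) (𝓝[<] 1) atBot :=
    tendsto_log_nhdsGT_zero.comp (by simpa using tendsto_const_sub_nhdsLT 1 1)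
  have hlower : Tendsto (fun m : ℝ ↦ π / 2 + -(π / 8 * log (1 - m))) (𝓝[<] 1) atTop :=
    tendsto_atTop_add_const_left _ _
      (tendsto_neg_atBot_atTop.comp (hlog.const_mul_atBot (by positivity)))
  refine tendsto_atTop_mono' _ ?_ hlower
  filter_upwards [Ioo_mem_nhdsLT one_pos] with m hm
  simpa only [sub_eq_add_neg] using le_ellipticK hm.1.le hm.2

lemma tendsto_one_sub_mul_ellipticK :
    Tendsto (fun m ↦ (1 - m) * ellipticK m) (𝓝[<] 1) (𝓝 0) := by
  have hupper : Tendsto (fun m : ℝ ↦ π / 2 * (1 - m) ^ (1 / 2 : ℝ)) (𝓝[<] 1) (𝓝 0) := by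
    have hcont : ContinuousAt (fun m : ℝ ↦ π / 2 * (1 - m) ^ (1 / 2 : ℝ)) 1 :=
      continuousAt_const.mul (.rpow_const (by fun_prop) (.inr (by norm_num)))
    simpa using hcont.tendsto.mono_left nhdsWithin_le_nhds
  refine squeeze_zero' ?_ ?_ hupper
  · filter_upwards [self_mem_nhdsWithin] with m hm
    exact mul_nonneg (sub_nonneg.mpr hm.le) (ellipticK_pos hm).le
  · filter_upwards [Ioo_mem_nhdsLT one_pos] with m hm
    have hm' : 0 < 1 - m := sub_pos.mpr hm.2
    calc (1 - m) * ellipticK m ≤ (1 - m) * (π / 2 * (1 - m) ^ (-(1 / 2) : ℝ)) := by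
          gcongr
          exact ellipticK_le hm.1.le hm.2
      _ = π / 2 * (1 - m) ^ (1 + -(1 / 2) : ℝ) := by
          rw [rpow_one_add' hm'.le (by norm_num)]
          ring
      _ = π / 2 * (1 - m) ^ (1 / 2 : ℝ) := by norm_num

lemma cos_sq_mul_one_sub_mul_sin_sq_rpow_le_one (hm : m ≤ 1) (θ : ℝ) :
    cos θ ^ 2 * (1 - m * sin θ ^ 2) ^ (-(1 / 2) : ℝ) ≤ 1 := by
  rcases eq_or_ne (cos θ) 0 with hcos | hcos
  · simp [hcos]
  have hle : cos θ ^ 2 ≤ 1 - m * sin θ ^ 2 := by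
    nlinarith [sq_nonneg (sin θ), sin_sq_add_cos_sq θ]
  calc cos θ ^ 2 * (1 - m * sin θ ^ 2) ^ (-(1 / 2) : ℝ)
      ≤ cos θ ^ 2 * (cos θ ^ 2) ^ (-(1 / 2) : ℝ) := by
        gcongr ?_ * ?_
        exact rpow_le_rpow_of_nonpos (by positivity) hle (by norm_num)
    _ = |cos θ| := sq_mul_sq_rpow_neg_half _
    _ ≤ 1 := abs_cos_le_one θ

lemma tendsto_cos_sq_mul_one_sub_mul_sin_sq_rpow (θ : ℝ) :
    Tendsto (fun m ↦ cos θ ^ 2 * (1 - m * sin θ ^ 2) ^ (-(1 / 2) : ℝ)) (𝓝 1) (𝓝 |cos θ|) := by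
  rcases eq_or_ne (cos θ) 0 with hcos | hcos
  · simp [hcos]
  have hbase : 1 - 1 * sin θ ^ 2 = cos θ ^ 2 := by rw [one_mul, ← cos_sq']
  have hcont : ContinuousAt (fun m ↦ cos θ ^ 2 * (1 - m * sin θ ^ 2) ^ (-(1 / 2) : ℝ)) 1 :=
    continuousAt_const.mul (.rpow_const (by fun_prop) (.inl (by rw [hbase]; positivity)))
  simpa only [hbase, sq_mul_sq_rpow_neg_half] using hcont.tendsto

lemma tendsto_ellipticB_one : Tendsto ellipticB (𝓝[<] 1) (𝓝 1) := by
  have hcos : ∫ θ in (0 : ℝ)..π / 2, |cos θ| = 1 := by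
    calc ∫ θ in (0 : ℝ)..π / 2, |cos θ| = ∫ θ in (0 : ℝ)..π / 2, cos θ := by
          refine intervalIntegral.integral_congr fun θ hθ ↦ ?_
          rw [uIcc_of_le pi_div_two_pos.le] at hθ
          exact abs_of_nonneg (cos_nonneg_of_mem_Icc ⟨by linarith [hθ.1, pi_pos], hθ.2⟩)
      _ = 1 := by simp
  suffices hlim : Tendsto ellipticB (𝓝[<] 1) (𝓝 (∫ θ in (0 : ℝ)..π / 2, |cos θ|)) by
    rwa [hcos] at hlim
  refine intervalIntegral.tendsto_integral_filter_of_dominated_convergence (fun _ ↦ (1 : ℝ))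
    ?_ ?_ intervalIntegrable_const ?_
  · filter_upwards [self_mem_nhdsWithin] with m hm
    exact (continuous_mul_one_sub_mul_sin_sq_rpow (by fun_prop) hm _).aestronglyMeasurable
  · filter_upwards [self_mem_nhdsWithin] with m hm
    refine .of_forall fun θ _ ↦ ?_
    have hpos := rpow_pos_of_pos (one_sub_mul_sin_sq_pos hm θ) (-(1 / 2))
    rw [norm_of_nonneg (by positivity)]
    exact cos_sq_mul_one_sub_mul_sin_sq_rpow_le_one (mem_Iio.mp hm).le θ
  · exact .of_forall fun θ _ ↦
      (tendsto_cos_sq_mul_one_sub_mul_sin_sq_rpow θ).mono_left nhdsWithin_le_nhds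

lemma tendsto_ellipticK_one_sub :
    Tendsto (fun m ↦ ellipticK (1 - m)) (𝓝[<] 1) (𝓝 (π / 2)) := by
  rw [← ellipticK_zero]
  refine (hasDerivAt_ellipticK one_pos).continuousAt.tendsto.comp ?_
  simpa using (tendsto_const_sub_nhdsLT 1 1).mono_right nhdsWithin_le_nhds

lemma tendsto_legendre_one :
    Tendsto (fun m ↦ m * ellipticB m * ellipticK (1 - m) +
      (1 - m) * ellipticB (1 - m) * ellipticK m) (𝓝[<] 1) (𝓝 (π / 2)) := by
  have hid : Tendsto (fun m : ℝ ↦ m) (𝓝[<] 1) (𝓝 1) := nhdsWithin_le_nhds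
  have hB : Tendsto (fun m ↦ ellipticB (1 - m)) (𝓝[<] 1) (𝓝 (ellipticB 0)) := by
    refine (continuousAt_ellipticB one_pos).tendsto.comp ?_
    simpa using (tendsto_const_sub_nhdsLT 1 1).mono_right nhdsWithin_le_nhds
  have hlim := ((hid.mul tendsto_ellipticB_one).mul tendsto_ellipticK_one_sub).add
    (tendsto_one_sub_mul_ellipticK.mul hB)
  simpa only [one_mul, zero_mul, add_zero, mul_right_comm] using hlim

lemma hasDerivAt_one_sub_mul_ellipticB_one_sub (hm : 0 < m) :
    HasDerivAt (fun x ↦ (1 - x) * ellipticB (1 - x)) (-(ellipticK (1 - m) / 2)) m :=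
  (hasDerivAt_mul_ellipticB (by linarith)).comp_const_sub 1 m

lemma hasDerivAt_ellipticK_one_sub (hm : 0 < m) :
    HasDerivAt (fun x ↦ ellipticK (1 - x)) (-(ellipticB (1 - m) / (2 * m))) m := by
  simpa only [sub_sub_cancel] using
    (hasDerivAt_ellipticK (m := 1 - m) (by linarith)).comp_const_sub 1 m

lemma hasDerivAt_legendre (hm : m ∈ Ioo 0 1) :
    HasDerivAt (fun x ↦ x * ellipticB x * ellipticK (1 - x) +
      (1 - x) * ellipticB (1 - x) * ellipticK x) 0 m := by
  have hm₀ : m ≠ 0 := hm.1.ne'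
  have hm₁ : 1 - m ≠ 0 := (sub_pos.mpr hm.2).ne'
  refine (((hasDerivAt_mul_ellipticB hm.2).mul (hasDerivAt_ellipticK_one_sub hm.1)).add
    ((hasDerivAt_one_sub_mul_ellipticB_one_sub hm.1).mul
      (hasDerivAt_ellipticK hm.2))).congr_deriv ?_
  field_simp
  ring

/-- **Legendre's relation**, usually written `E K' + E' K - K K' = π / 2`. -/
theorem legendre_relation (hm : m ∈ Ioo 0 1) :
    m * ellipticB m * ellipticK (1 - m) + (1 - m) * ellipticB (1 - m) * ellipticK m = π / 2 := by
  refine tendsto_nhds_unique (tendsto_const_nhds.congr' ?_) tendsto_legendre_one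
  filter_upwards [Ioo_mem_nhdsLT one_pos] with x hx
  exact isOpen_Ioo.is_const_of_deriv_eq_zero isPreconnected_Ioo
    (fun y hy ↦ (hasDerivAt_legendre hy).differentiableAt.differentiableWithinAt)
    (fun y hy ↦ (hasDerivAt_legendre hy).deriv) hm hx

lemma half_mul_ellipticB_half_mul_ellipticK_half :
    1 / 2 * ellipticB (1 / 2) * ellipticK (1 / 2) = π / 4 := by
  have hlegendre := legendre_relation (m := 1 / 2) (by norm_num)
  norm_num only at hlegendre ⊢
  linarith

lemma strictAntiOn_one_sub_mul_ellipticB_mul_ellipticK_cube :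
    StrictAntiOn (fun m ↦ (1 - m) * ellipticB (1 - m) * ellipticK m ^ 3) (Ioo 0 1) := by
  have hderiv : ∀ m ∈ Ioo (0 : ℝ) 1,
      HasDerivAt (fun m ↦ (1 - m) * ellipticB (1 - m) * ellipticK m ^ 3)
        (ellipticK m ^ 2 / 2 *
          (3 * (ellipticB (1 - m) * ellipticB m) - ellipticK (1 - m) * ellipticK m)) m := by
    intro m hm
    have hm₁ : 1 - m ≠ 0 := (sub_pos.mpr hm.2).ne'
    refine ((hasDerivAt_one_sub_mul_ellipticB_one_sub hm.1).mul
      ((hasDerivAt_ellipticK hm.2).fun_pow 3)).congr_deriv ?_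
    field_simp
    push_cast
    ring
  refine strictAntiOn_of_hasDerivWithinAt_neg (convex_Ioo 0 1) (HasDerivAt.continuousOn hderiv)
    (fun m hm ↦ (hderiv m (interior_subset hm)).hasDerivWithinAt) fun m hm ↦ ?_
  obtain ⟨hm₀, hm₁⟩ := interior_subset hm
  have hK := ellipticK_pos hm₁
  have hK' := ellipticK_pos (m := 1 - m) (by linarith)
  have hBB : ellipticB (1 - m) * ellipticB m ≤ ellipticK (1 - m) / 2 * (ellipticK m / 2) :=
    mul_le_mul (ellipticB_le_half_ellipticK (by linarith) (by linarith))
      (ellipticB_le_half_ellipticK hm₀ hm₁) (ellipticB_pos hm₁).le (by positivity)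
  have hKK := mul_pos hK' hK
  exact mul_neg_of_pos_of_neg (by positivity) (by linarith)

end EllipticIntegral

section Distortion

/-- The quotient `𝒦 / 𝒦'` of the complete elliptic integrals at the parameter `m = r²`, which is
`π / (2 μ(r))` for the Grötzsch modulus `μ`. -/
noncomputable def quarterPeriodRatio (m : ℝ) : ℝ :=
  ellipticK m / ellipticK (1 - m)

/-- The parameter `m = r²` for which the Grötzsch modulus `μ(r)` equals `π / (2 K)`; a junk
value unless `0 < K`. -/
noncomputable def distortionParam (K : ℝ) : ℝ :=
  Function.invFunOn quarterPeriodRatio (Ioo 0 1) K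

/-- The linear distortion function `λ(K)` of plane quasiconformal mappings. -/
noncomputable def linearDistortion (K : ℝ) : ℝ :=
  distortionParam K / (1 - distortionParam K)

/-- The constant `b = a / 2 = (2 / π) 𝒦(1 / √2)²`, for which `λ(K) exp (b (1 / K - K))` has zero
logarithmic derivative at `K = 1`. -/
noncomputable def distortionConst : ℝ :=
  2 / π * ellipticK (1 / 2) ^ 2

/-- The logarithm of `λ(K) exp (b (1 / K - K))`; the slopes of its chords from `K = 1` are the
values of `g`. -/
noncomputable def logNormalizedDistortion (K : ℝ) : ℝ :=
  log (linearDistortion K) + distortionConst * (1 / K - K)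

/-- The derivative of `logNormalizedDistortion` at `K`, as a function of the parameter
`m = distortionParam K`. -/
noncomputable def derivLogNormalizedDistortion (m : ℝ) : ℝ :=
  4 / π * ellipticK (1 - m) ^ 2 - distortionConst * ((quarterPeriodRatio m ^ 2)⁻¹ + 1)

variable {m K : ℝ}

lemma quarterPeriodRatio_pos (hm : m ∈ Ioo 0 1) : 0 < quarterPeriodRatio m :=
  div_pos (ellipticK_pos hm.2) (ellipticK_pos (by linarith [hm.1]))

lemma quarterPeriodRatio_half : quarterPeriodRatio (1 / 2) = 1 := by
  rw [quarterPeriodRatio, sub_half, div_self (ellipticK_pos one_half_lt_one).ne']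

lemma quarterPeriodRatio_one_sub (m : ℝ) :
    quarterPeriodRatio (1 - m) = (quarterPeriodRatio m)⁻¹ := by
  rw [quarterPeriodRatio, quarterPeriodRatio, sub_sub_cancel, inv_div]

lemma hasDerivAt_quarterPeriodRatio (hm : m ∈ Ioo 0 1) :
    HasDerivAt quarterPeriodRatio (π / (4 * m * (1 - m) * ellipticK (1 - m) ^ 2)) m := by
  have hm₀ : m ≠ 0 := hm.1.ne'
  have hm₁ : 1 - m ≠ 0 := (sub_pos.mpr hm.2).ne'
  have hK' : ellipticK (1 - m) ≠ 0 := (ellipticK_pos (by linarith [hm.1])).ne'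
  refine ((hasDerivAt_ellipticK hm.2).div (hasDerivAt_ellipticK_one_sub hm.1) hK').congr_deriv ?_
  field_simp
  linarith [legendre_relation hm]

lemma continuousOn_quarterPeriodRatio : ContinuousOn quarterPeriodRatio (Ioo 0 1) :=
  HasDerivAt.continuousOn fun _ hm ↦ hasDerivAt_quarterPeriodRatio hm

lemma strictMonoOn_quarterPeriodRatio : StrictMonoOn quarterPeriodRatio (Ioo 0 1) := by
  refine strictMonoOn_of_hasDerivWithinAt_pos (convex_Ioo 0 1) continuousOn_quarterPeriodRatio
    (fun m hm ↦ (hasDerivAt_quarterPeriodRatio (interior_subset hm)).hasDerivWithinAt)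
    fun m hm ↦ ?_
  obtain ⟨hm₀, hm₁⟩ := interior_subset hm
  have hK' := ellipticK_pos (m := 1 - m) (by linarith)
  positivity

lemma tendsto_quarterPeriodRatio_one : Tendsto quarterPeriodRatio (𝓝[<] 1) atTop :=
  tendsto_ellipticK_atTop.atTop_mul_pos (inv_pos.mpr pi_div_two_pos)
    (tendsto_ellipticK_one_sub.inv₀ pi_div_two_pos.ne')

lemma tendsto_quarterPeriodRatio_zero : Tendsto quarterPeriodRatio (𝓝[>] 0) (𝓝 0) := by
  have hlim := (tendsto_quarterPeriodRatio_one.comp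
    (by simpa using tendsto_const_sub_nhdsGT 1 0)).inv_tendsto_atTop
  refine hlim.congr fun m ↦ ?_
  simp only [Pi.inv_apply, Function.comp_apply, quarterPeriodRatio_one_sub, inv_inv]

lemma bijOn_quarterPeriodRatio : BijOn quarterPeriodRatio (Ioo 0 1) (Ioi 0) :=
  .mk (fun _ hm ↦ quarterPeriodRatio_pos hm) strictMonoOn_quarterPeriodRatio.injOn <|
    isPreconnected_Ioo.intermediate_value_Ioi (le_principal_iff.mpr (Ioo_mem_nhdsGT one_pos))
      (le_principal_iff.mpr (Ioo_mem_nhdsLT one_pos)) continuousOn_quarterPeriodRatio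
      tendsto_quarterPeriodRatio_zero tendsto_quarterPeriodRatio_one

lemma distortionParam_mem_Ioo (hK : 0 < K) : distortionParam K ∈ Ioo 0 1 :=
  bijOn_quarterPeriodRatio.surjOn.mapsTo_invFunOn hK

lemma quarterPeriodRatio_distortionParam (hK : 0 < K) :
    quarterPeriodRatio (distortionParam K) = K :=
  bijOn_quarterPeriodRatio.surjOn.rightInvOn_invFunOn hK

lemma distortionParam_quarterPeriodRatio (hm : m ∈ Ioo 0 1) :
    distortionParam (quarterPeriodRatio m) = m :=
  bijOn_quarterPeriodRatio.injOn.leftInvOn_invFunOn hm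

lemma distortionParam_one : distortionParam 1 = 1 / 2 := by
  simpa only [quarterPeriodRatio_half] using
    distortionParam_quarterPeriodRatio (m := 1 / 2) (by norm_num)

lemma strictMonoOn_distortionParam : StrictMonoOn distortionParam (Ioi 0) := by
  intro x hx y hy hxy
  rwa [← strictMonoOn_quarterPeriodRatio.lt_iff_lt (distortionParam_mem_Ioo hx)
    (distortionParam_mem_Ioo hy), quarterPeriodRatio_distortionParam hx,
    quarterPeriodRatio_distortionParam hy]

lemma image_distortionParam : distortionParam '' Ioi 0 = Ioo 0 1 := by
  refine Subset.antisymm (image_subset_iff.mpr fun _ ↦ distortionParam_mem_Ioo) fun m hm ↦ ?_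
  exact ⟨_, quarterPeriodRatio_pos hm, distortionParam_quarterPeriodRatio hm⟩

lemma continuousAt_distortionParam (hK : 0 < K) : ContinuousAt distortionParam K := by
  refine strictMonoOn_distortionParam.continuousAt_of_image_mem_nhds (Ioi_mem_nhds hK) ?_
  rw [image_distortionParam]
  exact isOpen_Ioo.mem_nhds (distortionParam_mem_Ioo hK)

lemma tendsto_distortionParam_atTop : Tendsto distortionParam atTop (𝓝[<] 1) := by
  have hmem : ∀ᶠ K in atTop, distortionParam K ∈ Ioo 0 1 :=
    (eventually_gt_atTop 0).mono fun _ ↦ distortionParam_mem_Ioo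
  refine tendsto_nhdsWithin_iff.mpr ⟨tendsto_order.mpr ⟨fun c hc ↦ ?_, fun c hc ↦ ?_⟩,
    hmem.mono fun _ hK ↦ hK.2⟩
  · obtain ⟨m, hcm, hm₁⟩ := exists_between (max_lt hc one_pos)
    have hm : m ∈ Ioo 0 1 := ⟨(le_max_right _ _).trans_lt hcm, hm₁⟩
    filter_upwards [eventually_gt_atTop (quarterPeriodRatio m)] with K hK
    have hlt := strictMonoOn_distortionParam (quarterPeriodRatio_pos hm)
      ((quarterPeriodRatio_pos hm).trans hK) hK
    rw [distortionParam_quarterPeriodRatio hm] at hlt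
    exact ((le_max_left _ _).trans_lt hcm).trans hlt
  · exact hmem.mono fun _ hK ↦ hK.2.trans hc

lemma hasDerivAt_distortionParam (hK : 0 < K) :
    HasDerivAt distortionParam (4 / π * ellipticK (1 - distortionParam K) ^ 2 *
      (distortionParam K * (1 - distortionParam K))) K := by
  have hmem := distortionParam_mem_Ioo hK
  have hm₀ : distortionParam K ≠ 0 := hmem.1.ne'
  have hm₁ : 1 - distortionParam K ≠ 0 := (sub_pos.mpr hmem.2).ne'
  have hK' : ellipticK (1 - distortionParam K) ≠ 0 := (ellipticK_pos (by linarith [hmem.1])).ne'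
  refine ((hasDerivAt_quarterPeriodRatio hmem).of_local_left_inverse
    (continuousAt_distortionParam hK) (by positivity) ?_).congr_deriv ?_
  · filter_upwards [Ioi_mem_nhds hK] with x hx using quarterPeriodRatio_distortionParam hx
  · field_simp

lemma linearDistortion_pos (hK : 0 < K) : 0 < linearDistortion K :=
  div_pos (distortionParam_mem_Ioo hK).1 (sub_pos.mpr (distortionParam_mem_Ioo hK).2)

lemma linearDistortion_one : linearDistortion 1 = 1 := by
  rw [linearDistortion, distortionParam_one]
  norm_num

lemma hasDerivAt_log_linearDistortion (hK : 0 < K) :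
    HasDerivAt (fun K ↦ log (linearDistortion K))
      (4 / π * ellipticK (1 - distortionParam K) ^ 2) K := by
  have hmem := distortionParam_mem_Ioo hK
  have hm₀ : distortionParam K ≠ 0 := hmem.1.ne'
  have hm₁ : 1 - distortionParam K ≠ 0 := (sub_pos.mpr hmem.2).ne'
  have hderiv := hasDerivAt_distortionParam hK
  refine ((hderiv.div (hderiv.const_sub 1) hm₁).log (linearDistortion_pos hK).ne').congr_deriv ?_
  simp only [Pi.div_apply]
  field_simp
  ring

lemma derivLogNormalizedDistortion_half : derivLogNormalizedDistortion (1 / 2) = 0 := by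
  rw [derivLogNormalizedDistortion, quarterPeriodRatio_half, distortionConst, sub_half]
  ring

lemma hasDerivAt_derivLogNormalizedDistortion (hm : m ∈ Ioo 0 1) :
    HasDerivAt derivLogNormalizedDistortion
      (4 * ellipticK (1 - m) / (π * m * (1 - m) * ellipticK m ^ 3) *
        (1 / 2 * ellipticB (1 / 2) * ellipticK (1 / 2) ^ 3 -
          (1 - m) * ellipticB (1 - m) * ellipticK m ^ 3)) m := by
  have hm₀ : m ≠ 0 := hm.1.ne'
  have hm₁ : 1 - m ≠ 0 := (sub_pos.mpr hm.2).ne'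
  have hK : ellipticK m ≠ 0 := (ellipticK_pos hm.2).ne'
  have hK' : ellipticK (1 - m) ≠ 0 := (ellipticK_pos (by linarith [hm.1])).ne'
  have hratio := ((hasDerivAt_quarterPeriodRatio hm).fun_pow 2).fun_inv
    (pow_ne_zero 2 (quarterPeriodRatio_pos hm).ne')
  have hconst : 1 / 2 * ellipticB (1 / 2) * ellipticK (1 / 2) ^ 3 =
      π ^ 2 / 8 * distortionConst := by
    rw [pow_succ' _ 2, ← mul_assoc, half_mul_ellipticB_half_mul_ellipticK_half, distortionConst]
    field_simp
    ring
  refine ((((hasDerivAt_ellipticK_one_sub hm.1).fun_pow 2).const_mul (4 / π)).sub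
    ((hratio.add_const 1).const_mul distortionConst)).congr_deriv ?_
  rw [hconst, quarterPeriodRatio]
  push_cast
  field_simp
  ring

lemma strictMonoOn_derivLogNormalizedDistortion :
    StrictMonoOn derivLogNormalizedDistortion (Ico (1 / 2) 1) := by
  have hsub : Ico (1 / 2 : ℝ) 1 ⊆ Ioo 0 1 := fun m hm ↦ ⟨one_half_pos.trans_le hm.1, hm.2⟩
  refine strictMonoOn_of_hasDerivWithinAt_pos (convex_Ico _ _)
    (HasDerivAt.continuousOn fun m hm ↦ hasDerivAt_derivLogNormalizedDistortion (hsub hm))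
    (fun m hm ↦ (hasDerivAt_derivLogNormalizedDistortion
      (hsub (interior_subset hm))).hasDerivWithinAt) fun m hm ↦ ?_
  have hmem := hsub (interior_subset hm)
  rw [interior_Ico] at hm
  have hm₀ := hmem.1
  have hm₁ := sub_pos.mpr hmem.2
  have hK := ellipticK_pos hmem.2
  have hK' := ellipticK_pos (m := 1 - m) (by linarith)
  have hlt := strictAntiOn_one_sub_mul_ellipticB_mul_ellipticK_cube (by norm_num) hmem hm.1
  simp only [sub_half] at hlt
  exact mul_pos (by positivity) (sub_pos.mpr hlt)

lemma tendsto_derivLogNormalizedDistortion_one :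
    Tendsto derivLogNormalizedDistortion (𝓝[<] 1) (𝓝 (π - distortionConst)) := by
  have hratio : Tendsto (fun m ↦ (quarterPeriodRatio m ^ 2)⁻¹) (𝓝[<] 1) (𝓝 0) :=
    ((tendsto_pow_atTop two_ne_zero).comp tendsto_quarterPeriodRatio_one).inv_tendsto_atTop
  have hlim := ((tendsto_ellipticK_one_sub.pow 2).const_mul (4 / π)).sub
    ((hratio.add_const 1).const_mul distortionConst)
  have hpi : 4 / π * (π / 2) ^ 2 = π := by
    field_simp
    norm_num
  rwa [hpi, zero_add, mul_one] at hlim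

lemma logNormalizedDistortion_one : logNormalizedDistortion 1 = 0 := by
  simp [logNormalizedDistortion, linearDistortion_one]

lemma hasDerivAt_logNormalizedDistortion (hK : 0 < K) :
    HasDerivAt logNormalizedDistortion (derivLogNormalizedDistortion (distortionParam K)) K := by
  have hinv : HasDerivAt (fun K : ℝ ↦ 1 / K - K) (-(K ^ 2)⁻¹ - 1) K := by
    simpa only [one_div] using (hasDerivAt_inv hK.ne').fun_sub (hasDerivAt_id' K)
  refine ((hasDerivAt_log_linearDistortion hK).add
    (hinv.const_mul distortionConst)).congr_deriv ?_
  rw [derivLogNormalizedDistortion, quarterPeriodRatio_distortionParam hK]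
  ring

lemma strictMonoOn_derivLogNormalizedDistortion_distortionParam :
    StrictMonoOn (fun K ↦ derivLogNormalizedDistortion (distortionParam K)) (Ici 1) := by
  refine strictMonoOn_derivLogNormalizedDistortion.comp
    (strictMonoOn_distortionParam.mono (Ici_subset_Ioi.mpr one_pos)) fun K hK ↦ ?_
  have hK₀ : 0 < K := one_pos.trans_le hK
  refine ⟨?_, (distortionParam_mem_Ioo hK₀).2⟩
  exact distortionParam_one ▸ strictMonoOn_distortionParam.monotoneOn (mem_Ioi.mpr one_pos) hK₀ hK

lemma strictMonoOn_slope_logNormalizedDistortion :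
    StrictMonoOn (slope logNormalizedDistortion 1) (Ioi 1) :=
  strictMonoOn_slope_of_strictMonoOn_deriv
    (fun _ hK ↦ hasDerivAt_logNormalizedDistortion (one_pos.trans_le hK))
    strictMonoOn_derivLogNormalizedDistortion_distortionParam

lemma tendsto_slope_logNormalizedDistortion_one :
    Tendsto (slope logNormalizedDistortion 1) (𝓝[>] 1) (𝓝 0) := by
  have hderiv := hasDerivAt_logNormalizedDistortion one_pos
  rw [distortionParam_one, derivLogNormalizedDistortion_half] at hderiv
  exact hderiv.tendsto_slope.mono_left (nhdsGT_le_nhdsNE 1)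

lemma tendsto_slope_logNormalizedDistortion_atTop :
    Tendsto (slope logNormalizedDistortion 1) atTop (𝓝 (π - distortionConst)) :=
  tendsto_slope_atTop_of_tendsto_deriv
    ((eventually_gt_atTop 0).mono fun _ ↦ hasDerivAt_logNormalizedDistortion)
    (tendsto_derivLogNormalizedDistortion_one.comp tendsto_distortionParam_atTop)

lemma image_slope_logNormalizedDistortion :
    slope logNormalizedDistortion 1 '' Ioi 1 = Ioo 0 (π - distortionConst) := by
  refine image_Ioi_eq_Ioo_of_tendsto strictMonoOn_slope_logNormalizedDistortion (fun K hK ↦ ?_)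
    tendsto_slope_logNormalizedDistortion_one tendsto_slope_logNormalizedDistortion_atTop
  have hcont := (hasDerivAt_logNormalizedDistortion (one_pos.trans hK)).continuousAt
  rw [slope_fun_def_field]
  exact ((hcont.sub continuousAt_const).div (continuousAt_id.sub continuousAt_const)
    (sub_pos.mpr (mem_Ioi.mp hK)).ne').continuousWithinAt

lemma ellK_sqrt (hm : 0 ≤ m) : ellK √m = ellipticK m := by
  rw [ellK, ellipticK, sq_sqrt hm]

lemma mu_sqrt (hm : m ∈ Ioo 0 1) : mu √m = π / (2 * quarterPeriodRatio m) := by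
  rw [mu, sq_sqrt hm.1.le, ellK_sqrt hm.1.le, ellK_sqrt (sub_nonneg.mpr hm.2.le),
    quarterPeriodRatio, mul_div_assoc', div_div_eq_mul_div, div_mul_eq_mul_div, div_div]

lemma eq_linearDistortion_of_mu_eq {lam : ℝ} (hK : 0 < K)
    (hlam : ∀ r ∈ Ioo (0 : ℝ) 1, mu r = π / (2 * K) → lam = r ^ 2 / (1 - r ^ 2)) :
    lam = linearDistortion K := by
  have hmem := distortionParam_mem_Ioo hK
  have hr : √(distortionParam K) ∈ Ioo (0 : ℝ) 1 :=
    ⟨sqrt_pos.mpr hmem.1, (sqrt_lt' one_pos).mpr (by simpa using hmem.2)⟩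
  have hmu : mu √(distortionParam K) = π / (2 * K) := by
    rw [mu_sqrt hmem, quarterPeriodRatio_distortionParam hK]
  rw [hlam _ hr hmu, sq_sqrt hmem.1.le, linearDistortion]

lemma distortionConst_eq : distortionConst = 4 / π * ellK (1 / √2) ^ 2 / 2 := by
  rw [distortionConst, one_div √2, ← sqrt_inv, ellK_sqrt (by positivity), one_div]
  ring

lemma one_div_sub_one_mul_log_eq_slope (hK : 0 < K) :
    1 / (K - 1) * log (linearDistortion K * exp (distortionConst * (1 / K - K))) =
      slope logNormalizedDistortion 1 K := by
  rw [slope_def_field, logNormalizedDistortion_one, sub_zero, logNormalizedDistortion,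
    log_mul (linearDistortion_pos hK).ne' (exp_ne_zero _), log_exp, one_div_mul_eq_div]

end Distortion

theorem stmt_5 (lam : ℝ → ℝ)
    (hlam : ∀ K : ℝ, 0 < K → ∀ r ∈ Set.Ioo (0:ℝ) 1,
      mu r = Real.pi / (2 * K) → lam K = r ^ 2 / (1 - r ^ 2)) (a b : ℝ)
    (ha : a = 4 / Real.pi * ellK (1 / Real.sqrt 2) ^ 2) (hb : b = a / 2) (g : ℝ → ℝ)
    (hg : g = fun K : ℝ => 1 / (K - 1) * Real.log (lam K * Real.exp (b * (1 / K - K)))) :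
    StrictMonoOn g (Set.Ioi 1) ∧
    Filter.Tendsto g (nhdsWithin 1 (Set.Ioi 1)) (nhds 0) ∧
    Filter.Tendsto g Filter.atTop (nhds (Real.pi - b)) ∧
    g '' Set.Ioi 1 = Set.Ioo 0 (Real.pi - b) := by
  obtain rfl : b = distortionConst := by rw [hb, ha, distortionConst_eq]
  have hslope : EqOn g (slope logNormalizedDistortion 1) (Ioi 1) := fun K hK ↦ by
    have hK₀ : 0 < K := one_pos.trans hK
    simp only [hg, eq_linearDistortion_of_mu_eq hK₀ (hlam K hK₀)]
    exact one_div_sub_one_mul_log_eq_slope hK₀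
  refine ⟨strictMonoOn_slope_logNormalizedDistortion.congr hslope.symm,
    tendsto_slope_logNormalizedDistortion_one.congr' ?_,
    tendsto_slope_logNormalizedDistortion_atTop.congr' ?_,
    hslope.image_eq.trans image_slope_logNormalizedDistortion⟩
  · exact hslope.symm.eventuallyEq_nhdsWithin
  · exact hslope.symm.eventuallyEq_of_mem (Ioi_mem_atTop 1)
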